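/- arXiv:2505.19655 — 2 statements merged into one kernel-verified Lean document; each statement's English description precedes it below -/
import Mathlib

section
/- Let K : ℝ → ℝ be C¹ and strictly decreasing on (0,∞), and let Ω be the triangle with vertices A, B, C satisfying |AB| > |AC|. Define V_Ω(P) = ∫_Ω K(|P - Q|) dQ. Then for any P on segment AC and P' on segment AB with |PA| = |P'A| and P ≠ A, we have V_Ω(P') > V_Ω(P). -/
open MeasureTheory Set Real

noncomputable section

abbrev E2 := EuclideanSpace ℝ (Fin 2)

/-! Let `σ` be the reflection in the perpendicular bisector of `P` and `P'`, which passes through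
`A`. The function `g Q = K |P' - Q| - K |P - Q|` is odd under `σ`, so its integral over `Ω` only
sees `Ω \ σ⁻¹ Ω`. As `AC` is the shorter side, `σ` maps the part of `Ω` on the side of `P` into `Ω`;
hence every point of `Ω \ σ⁻¹ Ω` is closer to `P'` than to `P`, and there `g > 0`. Finally
`B ∈ Ω` but `σ B ∉ Ω`, so `Ω \ σ⁻¹ Ω` has positive area. -/

open Module Metric AffineSubspace

section Integrals

theorem setIntegral_eq_setIntegral_sdiff_preimage_of_odd {X F : Type*} [MeasurableSpace X]
    {μ : Measure X} [NormedAddCommGroup F] [NormedSpace ℝ F] {σ : X → X}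
    (hσ : Function.Involutive σ) (hσμ : MeasurePreserving σ μ μ) {g : X → F}
    (hodd : ∀ x, g (σ x) = -g x) {s : Set X} (hs : MeasurableSet s) (hg : IntegrableOn g s μ) :
    ∫ x in s, g x ∂μ = ∫ x in s \ σ ⁻¹' s, g x ∂μ := by
  have hinvariant : σ ⁻¹' (s ∩ σ ⁻¹' s) = s ∩ σ ⁻¹' s := by
    rw [preimage_inter, ← preimage_comp, hσ.comp_self, preimage_id, inter_comm]
  have hzero : ∫ x in s ∩ σ ⁻¹' s, g x ∂μ = 0 := by
    have h := hσμ.setIntegral_preimage_emb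
      (MeasurableEquiv.ofInvolutive σ hσ hσμ.measurable).measurableEmbedding g (s ∩ σ ⁻¹' s)
    simp only [hinvariant, hodd, integral_neg] at h
    have := IsAddTorsionFree.of_isTorsionFree ℝ F
    exact self_eq_neg.1 h.symm
  rw [← integral_inter_add_sdiff (hσμ.measurable hs) hg, hzero, zero_add]

theorem setIntegral_pos_of_ae_pos {X : Type*} [MeasurableSpace X] {μ : Measure X} {g : X → ℝ}
    {s : Set X} (hg : IntegrableOn g s μ) (hpos : ∀ᵐ x ∂μ.restrict s, 0 < g x) (hs : μ s ≠ 0) :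
    0 < ∫ x in s, g x ∂μ := by
  have hnonneg : 0 ≤ᵐ[μ.restrict s] g := hpos.mono fun _ h ↦ h.le
  refine (integral_nonneg_of_ae hnonneg).lt_of_ne' fun hzero ↦ hs ?_
  have hg_zero := (integral_eq_zero_iff_of_nonneg_ae hnonneg hg).1 hzero
  rw [← Measure.restrict_eq_zero, ← ae_eq_bot, ← Filter.eventually_false_iff_eq_bot]
  filter_upwards [hpos, hg_zero] with x hx hx₀ using hx.ne' hx₀

theorem integrableOn_mul_Ioc_of_antitoneOn {K w : ℝ → ℝ} (hK : AntitoneOn K (Ioi 0))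
    (hw : Continuous w) {a : ℝ} (ha : 0 < a) (hint : IntegrableOn (fun r ↦ K r * w r) (Ioc 0 a))
    (b : ℝ) : IntegrableOn (fun r ↦ K r * w r) (Ioc 0 b) := by
  have hK_Icc : IntegrableOn K (Icc a b) :=
    (hK.mono fun _ hr ↦ ha.trans_le hr.1).integrableOn_isCompact isCompact_Icc
  refine (hint.union (hK_Icc.mul_continuousOn hw.continuousOn isCompact_Icc)).mono_set ?_
  exact fun r hr ↦ (le_total r a).imp (fun h ↦ ⟨hr.1, h⟩) (fun h ↦ ⟨h, hr.2⟩)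

theorem integrableOn_comp_dist_of_isBounded {E : Type*} [NormedAddCommGroup E] [NormedSpace ℝ E]
    [FiniteDimensional ℝ E] [Nontrivial E] [MeasurableSpace E] [BorelSpace E] (μ : Measure E)
    [μ.IsAddHaarMeasure] {K : ℝ → ℝ} (hK : AntitoneOn K (Ioi 0))
    (hint : IntegrableOn (fun r ↦ K r * r ^ (finrank ℝ E - 1)) (Ioc 0 1)) {s : Set E}
    (hs : Bornology.IsBounded s) (x : E) : IntegrableOn (fun y ↦ K (dist x y)) s μ := by
  obtain ⟨R, hR⟩ := hs.subset_ball x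
  have hradial : IntegrableOn (fun r ↦ r ^ (finrank ℝ E - 1) • K r) (Ioo 0 R) := by
    simpa only [smul_eq_mul, mul_comm] using
      (integrableOn_mul_Ioc_of_antitoneOn hK (by fun_prop) one_pos hint R).mono_set
        Ioo_subset_Ioc_self
  have hball : IntegrableOn (fun y ↦ K ‖y - x‖) ((· - x) ⁻¹' ball 0 R) μ :=
    ((measurePreserving_sub_right μ x).integrableOn_comp_preimage
      (measurableEmbedding_subRight x)).2 ((integrableOn_fun_norm_addHaar μ).2 hradial)
  simp_rw [dist_eq_norm_sub' x]
  exact hball.mono_set fun y hy ↦ by simpa [dist_eq_norm] using hR hy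

end Integrals

section Potential

variable {X : Type*} [MeasurableSpace X] {μ : Measure X} {K : ℝ → ℝ} {s : Set X}

/-- The potential `V_s(x) = ∫_s K(|x - y|) dμ(y)` of the set `s` for the radial kernel `K`. -/
def radialPotential [Dist X] (μ : Measure X) (K : ℝ → ℝ) (s : Set X) (x : X) : ℝ :=
  ∫ y in s, K (dist x y) ∂μ

theorem radialPotential_lt_radialPotential_apply_of_involutive [MetricSpace X]
    [NullSingletonClass μ] (hK : StrictAntiOn K (Ioi 0)) {σ : X → X}
    (hσ : Function.Involutive σ) (hσ_isom : Isometry σ) (hσμ : MeasurePreserving σ μ μ)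
    (hs : MeasurableSet s) (hint : ∀ z, IntegrableOn (fun y ↦ K (dist z y)) s μ) {x : X}
    (hcap : ∀ y ∈ s, dist x y ≤ dist (σ x) y → σ y ∈ s) (hpos : μ (s \ σ ⁻¹' s) ≠ 0) :
    radialPotential μ K s x < radialPotential μ K s (σ x) := by
  let g (y : X) : ℝ := K (dist (σ x) y) - K (dist x y)
  have hg_int : IntegrableOn g s μ := (hint (σ x)).sub (hint x)
  have hg_odd (y : X) : g (σ y) = -g y := by
    have hdist : dist x (σ y) = dist (σ x) y := by rw [← hσ_isom.dist_eq, hσ]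
    simp only [g, hσ_isom.dist_eq, hdist, neg_sub]
  have hg_pos : ∀ᵐ y ∂μ.restrict (s \ σ ⁻¹' s), 0 < g y := by
    refine (ae_restrict_iff' (hs.diff (hσμ.measurable hs))).2 ?_
    filter_upwards [Measure.ae_ne μ (σ x)] with y hy ⟨hys, hyσ⟩
    have hlt : dist (σ x) y < dist x y := not_le.1 fun h ↦ hyσ (hcap y hys h)
    have hdist_pos : 0 < dist (σ x) y := dist_pos.2 hy.symm
    exact sub_pos.2 (hK hdist_pos (hdist_pos.trans hlt) hlt)
  rw [← sub_pos]
  calc 0 < ∫ y in s \ σ ⁻¹' s, g y ∂μ :=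
        setIntegral_pos_of_ae_pos (hg_int.mono_set sdiff_subset) hg_pos hpos
    _ = ∫ y in s, g y ∂μ :=
        (setIntegral_eq_setIntegral_sdiff_preimage_of_odd hσ hσμ hg_odd hs hg_int).symm
    _ = radialPotential μ K s (σ x) - radialPotential μ K s x := integral_sub (hint _) (hint _)

end Potential

section BisectorReflection

variable {V P : Type*} [NormedAddCommGroup V] [InnerProductSpace ℝ V] [MetricSpace P]
  [NormedAddTorsor V P]

instance nonempty_perpBisector (p q : P) : Nonempty (perpBisector p q) :=
  ⟨⟨_, midpoint_mem_perpBisector p q⟩⟩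

instance hasOrthogonalProjection_direction_perpBisector (p q : P) :
    (perpBisector p q).direction.HasOrthogonalProjection := by
  rw [direction_perpBisector]
  infer_instance

/-- The reflection in the perpendicular bisector of `p` and `q`, which exchanges these two points;
it is the identity when `p = q`. -/
def bisectorReflection (p q : P) : P ≃ᵃⁱ[ℝ] P :=
  EuclideanGeometry.reflection (perpBisector p q)

theorem bisectorReflection_involutive (p q : P) : Function.Involutive (bisectorReflection p q) :=
  EuclideanGeometry.reflection_involutive _

theorem bisectorReflection_eq_self {p q c : P} (h : dist c p = dist c q) :
    bisectorReflection p q c = c :=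
  (EuclideanGeometry.reflection_eq_self_iff c).2 (mem_perpBisector_iff_dist_eq.2 h)

theorem bisectorReflection_left (p q : P) : bisectorReflection p q p = q := by
  have hmem : p -ᵥ midpoint ℝ p q ∈ (perpBisector p q).directionᗮ := by
    rw [direction_perpBisector, left_vsub_midpoint, ← neg_vsub_eq_vsub_rev q p]
    exact Submodule.le_orthogonal_orthogonal _ <| Submodule.smul_mem _ _ <| neg_mem <|
      Submodule.mem_span_singleton_self _
  rw [bisectorReflection,
    EuclideanGeometry.reflection_apply_of_mem _ p (midpoint_mem_perpBisector p q),
    Submodule.reflection_mem_subspace_orthogonalComplement_eq_neg hmem, neg_vsub_eq_vsub_rev,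
    midpoint_vsub_left, ← right_vsub_midpoint, vsub_vadd]

theorem bisectorReflection_right (p q : P) : bisectorReflection p q q = p := by
  simpa only [bisectorReflection_left] using bisectorReflection_involutive p q p

end BisectorReflection

theorem measurePreserving_of_affineIsometryEquiv {V : Type*} [NormedAddCommGroup V]
    [InnerProductSpace ℝ V] [FiniteDimensional ℝ V] [MeasurableSpace V] [BorelSpace V]
    (f : V ≃ᵃⁱ[ℝ] V) : MeasurePreserving f := by
  rw [← InnerProductSpace.euclideanHausdorffMeasure_eq_volume]
  exact f.toIsometryEquiv.measurePreserving_euclideanHausdorffMeasure _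

theorem measure_sdiff_pos_of_convex {E : Type*} [AddCommGroup E] [Module ℝ E] [TopologicalSpace E]
    [IsTopologicalAddGroup E] [ContinuousSMul ℝ E] [MeasurableSpace E] (μ : Measure E)
    [μ.IsOpenPosMeasure] {s t : Set E} (hs : Convex ℝ s) (hs_int : (interior s).Nonempty)
    (ht : IsClosed t) (hst : (s \ t).Nonempty) : 0 < μ (s \ t) := by
  obtain ⟨x, hxs, hxt⟩ := hst
  have hx : x ∈ closure (interior s) := by
    rw [hs.closure_interior_eq_closure_of_nonempty_interior hs_int]
    exact subset_closure hxs
  have hne : (tᶜ ∩ interior s).Nonempty := mem_closure_iff.1 hx _ ht.isOpen_compl hxt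
  refine ((ht.isOpen_compl.inter isOpen_interior).measure_pos μ hne).trans_le (measure_mono ?_)
  exact fun y hy ↦ ⟨interior_subset hy.2, hy.1⟩

theorem affineIndependent_triple_iff_linearIndependent_sub {𝕜 E : Type*} [Ring 𝕜] [AddCommGroup E]
    [Module 𝕜 E] {A B C : E} :
    AffineIndependent 𝕜 ![A, B, C] ↔ LinearIndependent 𝕜 ![B - A, C - A] := by
  rw [affineIndependent_iff_linearIndependent_vsub 𝕜 _ (0 : Fin 3),
    ← linearIndependent_equiv (finSuccAboveEquiv (0 : Fin 3))]
  convert! Iff.rfl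
  ext i
  fin_cases i <;> rfl

theorem interior_convexHull_triple_nonempty {E : Type*} [NormedAddCommGroup E] [NormedSpace ℝ E]
    (hE : finrank ℝ E = 2) {A B C : E} (h : AffineIndependent ℝ ![A, B, C]) :
    (interior (convexHull ℝ {A, B, C})).Nonempty := by
  have : FiniteDimensional ℝ E := .of_finrank_eq_succ hE
  have hspan : affineSpan ℝ (range ![A, B, C]) = ⊤ :=
    h.affineSpan_eq_top_iff_card_eq_finrank_add_one.2 (by simp [hE])
  have hrange : range ![A, B, C] = {A, B, C} := by
    simp only [Matrix.range_cons, Matrix.range_empty, union_empty, singleton_union]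
  rwa [interior_convexHull_nonempty_iff_affineSpan_eq_top, ← hrange]

theorem mem_convexHull_corner_iff {𝕜 E : Type*} [Field 𝕜] [LinearOrder 𝕜] [IsStrictOrderedRing 𝕜]
    [AddCommGroup E] [Module 𝕜 E] {A u v Q : E} {b c : 𝕜} (hb : 0 < b) (hc : 0 < c) :
    Q ∈ convexHull 𝕜 {A, A + b • u, A + c • v} ↔
      ∃ x y : 𝕜, 0 ≤ x ∧ 0 ≤ y ∧ x / b + y / c ≤ 1 ∧ Q = A + (x • u + y • v) := by
  constructor
  · rw [convexHull_insert (insert_nonempty _ _), convexHull_pair, convexJoin_singleton_left,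
      mem_iUnion₂]
    rintro ⟨_, ⟨p, q, hp, hq, hpq, rfl⟩, r, s, hr, hs, hrs, rfl⟩
    refine ⟨s * p * b, s * q * c, by positivity, by positivity, ?_, ?_⟩
    · rw [mul_div_cancel_right₀ _ hb.ne', mul_div_cancel_right₀ _ hc.ne', ← mul_add, hpq]
      linarith
    · obtain rfl : q = 1 - p := by linarith
      obtain rfl : r = 1 - s := by linarith
      module
  · rintro ⟨x, y, hx, hy, hxy, rfl⟩
    refine mem_convexHull_of_exists_fintype ![1 - (x / b + y / c), x / b, y / c]
      ![A, A + b • u, A + c • v] ?_ ?_ ?_ ?_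
    · simp [Fin.forall_fin_succ, hxy, div_nonneg hx hb.le, div_nonneg hy hc.le]
    · simp only [Fin.sum_univ_three, Matrix.cons_val]
      ring
    · simp [Fin.forall_fin_succ]
    · simp only [Fin.sum_univ_three, Matrix.cons_val, smul_add, smul_smul,
        div_mul_cancel₀ _ hb.ne', div_mul_cancel₀ _ hc.ne']
      module

theorem affineMap_apply_add_swap {𝕜 E : Type*} [Ring 𝕜] [AddCommGroup E] [Module 𝕜 E]
    (f : E →ᵃ[𝕜] E) {A u v : E} (hA : f A = A) (hu : f (A + u) = A + v) (hv : f (A + v) = A + u)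
    (x y : 𝕜) : f (A + (x • u + y • v)) = A + (y • u + x • v) := by
  have hf (w : E) : f (A + w) = A + f.linear w := by
    simpa [hA, add_comm] using f.map_vadd A w
  rw [hf, add_right_inj] at hu hv
  rw [hf, map_add, map_smul, map_smul, hu, hv, add_comm (x • v)]

section Corner

variable {E : Type*} [NormedAddCommGroup E] [InnerProductSpace ℝ E] {A u v Q : E} {b c : ℝ}

theorem norm_sub_sq_sub_norm_sub_sq_of_norm_eq (h : ‖u‖ = ‖v‖) (x y : ℝ) :
    ‖v - (x • u + y • v)‖ ^ 2 - ‖u - (x • u + y • v)‖ ^ 2 = (x - y) * ‖u - v‖ ^ 2 := by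
  simp only [norm_sub_sq_real, inner_add_right, inner_smul_right, real_inner_self_eq_norm_sq,
    real_inner_comm u v, h]
  ring

theorem bisectorReflection_apply_add_swap (h : ‖u‖ = ‖v‖) (x y : ℝ) :
    bisectorReflection (A + v) (A + u) (A + (x • u + y • v)) = A + (y • u + x • v) :=
  affineMap_apply_add_swap (bisectorReflection (A + v) (A + u)).toAffineEquiv.toAffineMap
    (bisectorReflection_eq_self (by simp [h])) (bisectorReflection_right _ _)
    (bisectorReflection_left _ _) x y

theorem bisectorReflection_mem_corner (h : ‖u‖ = ‖v‖) (huv : u ≠ v) (hc : 0 < c) (hcb : c ≤ b)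
    (hQ : Q ∈ convexHull ℝ {A, A + b • u, A + c • v}) (hdist : dist (A + v) Q ≤ dist (A + u) Q) :
    bisectorReflection (A + v) (A + u) Q ∈ convexHull ℝ {A, A + b • u, A + c • v} := by
  have hb : 0 < b := hc.trans_le hcb
  obtain ⟨x, y, hx, hy, hxy, rfl⟩ := (mem_convexHull_corner_iff hb hc).1 hQ
  have hle : x ≤ y := by
    rw [dist_add_left, dist_add_left, dist_eq_norm, dist_eq_norm,
      ← sq_le_sq₀ (norm_nonneg _) (norm_nonneg _), ← sub_nonpos,
      norm_sub_sq_sub_norm_sub_sq_of_norm_eq h] at hdist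
    have hpos : 0 < ‖u - v‖ ^ 2 := pow_pos (norm_sub_pos_iff.2 huv) 2
    exact sub_nonpos.1 (nonpos_of_mul_nonpos_left hdist hpos)
  have hweight : y / b + x / c ≤ x / b + y / c := by
    have : (y - x) / b ≤ (y - x) / c := div_le_div_of_nonneg_left (sub_nonneg.2 hle) hc hcb
    rw [sub_div, sub_div] at this
    linarith
  exact (mem_convexHull_corner_iff hb hc).2
    ⟨y, x, hy, hx, hweight.trans hxy, bisectorReflection_apply_add_swap h x y⟩

theorem bisectorReflection_notMem_corner (h : ‖u‖ = ‖v‖) (huv : LinearIndependent ℝ ![u, v])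
    (hc : 0 < c) (hcb : c < b) :
    bisectorReflection (A + v) (A + u) (A + b • u) ∉
      convexHull ℝ {A, A + b • u, A + c • v} := by
  have hb : 0 < b := hc.trans hcb
  have hreflect : bisectorReflection (A + v) (A + u) (A + b • u) = A + b • v := by
    simpa using bisectorReflection_apply_add_swap (A := A) h b 0
  rw [hreflect, mem_convexHull_corner_iff hb hc]
  rintro ⟨x, y, -, -, hxy, heq⟩
  have hcoord : x = 0 ∧ y - b = 0 := LinearIndependent.pair_iff.1 huv x (y - b) <| by
    rw [sub_smul, ← add_sub_assoc, add_left_cancel heq, sub_self]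
  obtain rfl : y = b := sub_eq_zero.1 hcoord.2
  rw [hcoord.1, zero_div, zero_add, div_le_one hc] at hxy
  exact hcb.not_ge hxy

end Corner

section Comparison

variable {E : Type*} [NormedAddCommGroup E] [InnerProductSpace ℝ E] [FiniteDimensional ℝ E]
  [MeasurableSpace E] [BorelSpace E]

theorem radialPotential_corner_lt (hE : finrank ℝ E = 2) {K : ℝ → ℝ}
    (hK : StrictAntiOn K (Ioi 0)) (hKint : IntegrableOn (fun r ↦ K r * r) (Ioc 0 1)) {A u v : E}
    {b c : ℝ} (hABC : AffineIndependent ℝ ![A, A + b • u, A + c • v]) (h : ‖u‖ = ‖v‖)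
    (hc : 0 < c) (hcb : c < b) :
    radialPotential volume K (convexHull ℝ {A, A + b • u, A + c • v}) (A + v) <
      radialPotential volume K (convexHull ℝ {A, A + b • u, A + c • v}) (A + u) := by
  have : Nontrivial E := nontrivial_of_finrank_eq_succ hE
  have huv : LinearIndependent ℝ ![u, v] :=
    (LinearIndependent.pair_smul_smul_iff (hc.trans hcb).ne'.isUnit hc.ne'.isUnit).1 <| by
      simpa only [add_sub_cancel_left] using
        affineIndependent_triple_iff_linearIndependent_sub.1 hABC
  have hu_ne_v : u ≠ v := huv.injective.ne (zero_ne_one (α := Fin 2))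
  set T : Set E := convexHull ℝ {A, A + b • u, A + c • v}
  have hT : IsCompact T := (toFinite _).isCompact_convexHull ℝ
  let σ := bisectorReflection (A + v) (A + u)
  have hint : ∀ z, IntegrableOn (fun y ↦ K (dist z y)) T :=
    integrableOn_comp_dist_of_isBounded volume hK.antitoneOn (by simpa [hE] using hKint)
      hT.isBounded
  have hcap : ∀ Q ∈ T, dist (A + v) Q ≤ dist (σ (A + v)) Q → σ Q ∈ T := fun Q hQ hdist ↦
    bisectorReflection_mem_corner h hu_ne_v hc hcb.le hQ <| by
      rwa [bisectorReflection_left] at hdist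
  have hdiff : (T \ σ ⁻¹' T).Nonempty :=
    ⟨A + b • u, subset_convexHull ℝ _ (by simp), bisectorReflection_notMem_corner h huv hc hcb⟩
  have hpos : 0 < volume (T \ σ ⁻¹' T) :=
    measure_sdiff_pos_of_convex volume (convex_convexHull ℝ _)
      (interior_convexHull_triple_nonempty hE hABC) (hT.isClosed.preimage σ.continuous) hdiff
  have hlt := radialPotential_lt_radialPotential_apply_of_involutive hK
    (bisectorReflection_involutive _ _) σ.isometry (measurePreserving_of_affineIsometryEquiv σ)
    hT.measurableSet hint hcap hpos.ne'
  rwa [bisectorReflection_left] at hlt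

theorem stmt_1_general (hE : finrank ℝ E = 2)
    (K : ℝ → ℝ) (hK : StrictAntiOn K (Ioi 0)) (hKint : IntegrableOn (fun r ↦ K r * r) (Ioc 0 1))
    (A B C : E) (hABC : AffineIndependent ℝ ![A, B, C]) (hside : dist A C < dist A B)
    (P P' : E) (hP : SameRay ℝ (P - A) (C - A)) (hP' : SameRay ℝ (P' - A) (B - A))
    (hdist : dist P A = dist P' A) (hPne : P ≠ A) :
    radialPotential volume K (convexHull ℝ {A, B, C}) P <
      radialPotential volume K (convexHull ℝ {A, B, C}) P' := by
  have hCA : C ≠ A := hABC.injective.ne (show (2 : Fin 3) ≠ 0 by decide)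
  have hBA : B ≠ A := hABC.injective.ne (show (1 : Fin 3) ≠ 0 by decide)
  have hP'ne : P' ≠ A := dist_pos.1 (hdist ▸ dist_pos.2 hPne)
  obtain ⟨c, hc, hC⟩ := hP.exists_pos_left (sub_ne_zero.2 hPne) (sub_ne_zero.2 hCA)
  obtain ⟨b, hb, hB⟩ := hP'.exists_pos_left (sub_ne_zero.2 hP'ne) (sub_ne_zero.2 hBA)
  have hnorm : ‖P' - A‖ = ‖P - A‖ := by simpa only [dist_eq_norm] using hdist.symm
  have hcb : c < b := by
    rw [dist_eq_norm', dist_eq_norm', ← hC, ← hB, norm_smul_of_nonneg hc.le,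
      norm_smul_of_nonneg hb.le, hnorm] at hside
    exact lt_of_mul_lt_mul_right hside (norm_nonneg _)
  obtain rfl : A + c • (P - A) = C := by rw [hC, add_sub_cancel]
  obtain rfl : A + b • (P' - A) = B := by rw [hB, add_sub_cancel]
  simpa only [add_sub_cancel] using radialPotential_corner_lt hE hK hKint hABC hnorm hc hcb

end Comparison

/-- boundary comparison of `V_Ω` for points equidistant from `A`
on the sides `AC` and `AB`, when `|AB| > |AC|`. -/
theorem stmt_1
    (K : ℝ → ℝ) (hK1 : ContDiff ℝ 1 K) (hKanti : StrictAntiOn K (Set.Ioi 0))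
    (hKint : IntegrableOn (fun r => K r * r) (Set.Ioc (0:ℝ) 1))
    (A B C : E2) (hABC : AffineIndependent ℝ ![A, B, C])
    (hside : dist A B > dist A C)
    (P P' : E2) (hP : P ∈ segment ℝ A C) (hP' : P' ∈ segment ℝ A B)
    (hdist : dist P A = dist P' A) (hPne : P ≠ A) :
    (∫ Q in convexHull ℝ {A, B, C}, K (dist P' Q)) >
      ∫ Q in convexHull ℝ {A, B, C}, K (dist P Q) := by
  exact stmt_1_general finrank_euclideanSpace_fin K hKanti hKint A B C hABC hside P P'
    (mem_segment_iff_wbtw.1 hP).sameRay_vsub_left (mem_segment_iff_wbtw.1 hP').sameRay_vsub_left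
    hdist hPne
end
end

section
/- Let Ω ⊂ ℝ² be a triangle ABC and K : ℝ → ℝ be C¹, strictly decreasing on (0,∞), with ∫₀¹ K(r) r dr < ∞. Define V_Ω(x) = ∫_Ω K(|x−y|) dy. Then the averaged boundary values of V_Ω on the three sides coincide: (1/|AB|) ∫_{AB} V_Ω ds = (1/|BC|) ∫_{BC} V_Ω ds = (1/|AC|) ∫_{AC} V_Ω ds. -/
open MeasureTheory Set Real

noncomputable section

/-- The arc-length integral of a function `V` over the segment from `P` to `Q`. -/
def sideIntegral (V : E2 → ℝ) (P Q : E2) : ℝ :=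
  dist P Q * ∫ t in (0:ℝ)..1, V ((1 - t) • P + t • Q)

/-!
Write `T` for the triangle and `k(x - y)` for the kernel, with `k` even. By Fubini, the average of
`V` over a side is `∫ w(d) k(d) dd`, where `w(d)` is the fraction of that side lying in `T + d`.
The overlap `T ∩ (T + d)`, if not empty, is a copy of `T` scaled by some ratio `ρ(d)`. If `d` is
parallel to the chosen side or points out of `T` across it, then one side of the overlap lies on the
chosen side and `w(d) = ρ(d)`; otherwise `T + d` misses that side and `w(d) = 0`. So `w` is `ρ`
cut off to a half-plane through the origin. Since `ρ` and `k` are even, the average is half of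
`∫ ρ(d) k(d) dd`, which does not depend on the side.
-/

section Kernel

open scoped Pointwise

variable {E F : Type*} [AddCommGroup E] [TopologicalSpace E] [IsTopologicalAddGroup E]
  [SecondCountableTopology E] [MeasurableSpace E] [BorelSpace E] {μ : Measure E} [SFinite μ]
  [NormedAddCommGroup F] {k : E → F} {X : Type*} [MeasurableSpace X]
  {ν : Measure X} [IsFiniteMeasure ν] {γ : X → E} {S T : Set E}

theorem measurableSet_sub_mem (hγ : Measurable γ) (hT : MeasurableSet T) :
    MeasurableSet {z : X × E | γ z.1 - z.2 ∈ T} :=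
  ((hγ.comp measurable_fst).sub measurable_snd) hT

variable [T2Space E]

theorem integrable_indicator_sub_mem (hk : LocallyIntegrable k μ) (hγ : Measurable γ)
    (hS : IsCompact S) (hγS : ∀ᵐ x ∂ν, γ x ∈ S) (hT : IsCompact T) :
    Integrable ({z : X × E | γ z.1 - z.2 ∈ T}.indicator fun z ↦ k z.2) (ν.prod μ) := by
  have hST : IsCompact (S - T) := sub_eq_add_neg S T ▸ hS.add hT.neg
  have h_cut : Integrable (fun z : X × E ↦ (S - T).indicator k z.2) (ν.prod μ) :=
    ((hk.integrableOn_isCompact hST).integrable_indicator hST.measurableSet).comp_snd ν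
  refine (h_cut.indicator (measurableSet_sub_mem hγ hT.measurableSet)).congr ?_
  filter_upwards [Measure.quasiMeasurePreserving_fst.ae hγS] with z hzS
  classical
  by_cases hzT : γ z.1 - z.2 ∈ T
  · have hz : z.2 ∈ S - T := ⟨γ z.1, hzS, γ z.1 - z.2, hzT, sub_sub_cancel _ _⟩
    simp only [indicator_apply, mem_ofPred_eq, hzT, hz, if_true]
  · simp only [indicator_apply, mem_ofPred_eq, hzT, if_false]

theorem integral_setIntegral_sub_eq_integral_measureReal_smul [NormedSpace ℝ F] [CompleteSpace F]
    [μ.IsAddLeftInvariant] [μ.IsNegInvariant] (hk : LocallyIntegrable k μ) (hγ : Measurable γ)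
    (hS : IsCompact S) (hγS : ∀ᵐ x ∂ν, γ x ∈ S) (hT : IsCompact T) :
    ∫ x, ∫ y in T, k (γ x - y) ∂μ ∂ν = ∫ d, ν.real {x | γ x - d ∈ T} • k d ∂μ := by
  have h_subst (x : X) : ∫ y in T, k (γ x - y) ∂μ = ∫ d, {d | γ x - d ∈ T}.indicator k d ∂μ := by
    classical
    rw [← integral_indicator hT.measurableSet, ← integral_sub_left_eq_self _ μ (γ x)]
    simp only [indicator_apply, mem_ofPred_eq, sub_sub_cancel]
  have h_slice (d : E) :
      ∫ x, {x | γ x - d ∈ T}.indicator (fun _ ↦ k d) x ∂ν = ν.real {x | γ x - d ∈ T} • k d :=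
    integral_indicator_const _ ((hγ.sub_const d) hT.measurableSet)
  simp_rw [h_subst, ← h_slice]
  exact integral_integral_swap (integrable_indicator_sub_mem hk hγ hS hγS hT)

end Kernel

section HalfSpace

variable {E F : Type*} [NormedAddCommGroup E] [NormedSpace ℝ E] [FiniteDimensional ℝ E]
  [MeasurableSpace E] [BorelSpace E] {μ : Measure E} [μ.IsAddHaarMeasure]
  [NormedAddCommGroup F] [NormedSpace ℝ F] {g : E → F} {f : E →ₗ[ℝ] ℝ}

theorem measurableSet_setOf_linearMap_nonpos (f : E →ₗ[ℝ] ℝ) : MeasurableSet {x | f x ≤ 0} :=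
  (isClosed_le f.continuous_of_finiteDimensional continuous_const).measurableSet

theorem measure_setOf_linearMap_eq_zero (hf : f ≠ 0) : μ {x | f x = 0} = 0 :=
  Measure.addHaar_submodule μ (LinearMap.ker f) (mt LinearMap.ker_eq_top.mp hf)

theorem two_smul_setIntegral_halfSpace_of_even (hg : g.Even) (hf : f ≠ 0) :
    (2 : ℝ) • ∫ x in {x | f x ≤ 0}, g x ∂μ = ∫ x, g x ∂μ := by
  have h_compl : ({x | f x ≤ 0}ᶜ : Set E) =ᵐ[μ] Neg.neg ⁻¹' {x | f x ≤ 0} := by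
    filter_upwards [measure_eq_zero_iff_ae_notMem.mp (measure_setOf_linearMap_eq_zero (μ := μ) hf)]
      with x (hx : f x ≠ 0)
    change (¬ f x ≤ 0) = (f (-x) ≤ 0)
    rw [map_neg, neg_nonpos, not_le, (Ne.symm hx).le_iff_lt]
  have h_neg : MeasurePreserving Neg.neg μ μ := Measure.measurePreserving_neg μ
  have h_emb : MeasurableEmbedding (Neg.neg : E → E) := measurableEmbedding_neg
  have hg_comp : g ∘ Neg.neg = g := funext hg
  by_cases h_int : Integrable g μ
  · have h_flip : ∫ x in {x | f x ≤ 0}ᶜ, g x ∂μ = ∫ x in {x | f x ≤ 0}, g x ∂μ := by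
      rw [setIntegral_congr_set h_compl]
      simpa only [hg.eq] using h_neg.setIntegral_preimage_emb h_emb g {x | f x ≤ 0}
    rw [two_smul, ← integral_add_compl (measurableSet_setOf_linearMap_nonpos f) h_int, h_flip]
  · have h_half : ¬ IntegrableOn g {x | f x ≤ 0} μ := by
      intro h_on
      refine h_int (integrableOn_univ.mp ?_)
      rw [← union_compl_self {x | f x ≤ 0}]
      refine h_on.union (IntegrableOn.congr_set_ae ?_ h_compl)
      rwa [← hg_comp, h_neg.integrableOn_comp_preimage h_emb]
    rw [integral_undef h_int, integral_undef h_half, smul_zero]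

end HalfSpace

section Triangle

variable {E : Type*} [NormedAddCommGroup E] [NormedSpace ℝ E]

/-- The number `r ∈ [0, 1]` such that the simplex `T` spanned by `b` meets its translate `T + d` in
a simplex homothetic to `T` with ratio `r`; here `r = 0` when the intersection is empty. In
barycentric coordinates `T ∩ (T + d)` is cut out by `max 0 (dᵢ) ≤ xᵢ`, where `∑ xᵢ = 1` and
`∑ dᵢ = 0`. -/
def overlapRatio {ι : Type*} [Fintype ι] (b : AffineBasis ι ℝ E) (d : E) : ℝ :=
  (1 - ∑ i, ((b.coord i).linear d)⁺)⁺

theorem sum_coord_linear_eq_zero {ι : Type*} [Fintype ι] (b : AffineBasis ι ℝ E) (d : E) :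
    ∑ i, (b.coord i).linear d = 0 := by
  have h_add : ∑ i, b.coord i (d +ᵥ (0 : E)) = 1 := b.sum_coord_apply_eq_one _
  simp_rw [AffineMap.map_vadd, vadd_eq_add, Finset.sum_add_distrib] at h_add
  rwa [b.sum_coord_apply_eq_one, add_eq_right] at h_add

theorem even_overlapRatio {ι : Type*} [Fintype ι] (b : AffineBasis ι ℝ E) :
    (overlapRatio b).Even := by
  intro d
  have h_sum : ∑ i, ((b.coord i).linear d)⁺ = ∑ i, ((b.coord i).linear d)⁻ := by
    rw [← sub_eq_zero, ← Finset.sum_sub_distrib]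
    simpa only [posPart_sub_negPart] using sum_coord_linear_eq_zero b d
  simp only [overlapRatio, map_neg, posPart_neg, h_sum]

theorem coord_linear_ne_zero {ι : Type*} (b : AffineBasis ι ℝ E) {i l : ι} (hil : i ≠ l) :
    (b.coord l).linear ≠ 0 := by
  intro h_zero
  have h_sub := (b.coord l).linearMap_vsub (b l) (b i)
  rw [h_zero, b.coord_apply_eq, b.coord_apply_ne hil.symm, vsub_eq_sub (1 : ℝ), sub_zero] at h_sub
  exact zero_ne_one h_sub

theorem univ_fin_three_eq {i j l : Fin 3} (hij : i ≠ j) (hil : i ≠ l) (hjl : j ≠ l) :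
    (Finset.univ : Finset (Fin 3)) = {i, j, l} := by
  decide +revert

variable (b : AffineBasis (Fin 3) ℝ E) {i j l : Fin 3}

theorem lineMap_sub_mem_convexHull_iff (hij : i ≠ j) (hil : i ≠ l) (hjl : j ≠ l) (t : ℝ) (d : E) :
    AffineMap.lineMap (b i) (b j) t - d ∈ convexHull ℝ (range b) ↔
      t ∈ Icc ((b.coord j).linear d) (1 - (b.coord i).linear d) ∧ (b.coord l).linear d ≤ 0 := by
  have h_univ (p : Fin 3 → Prop) : (∀ m, p m) ↔ p i ∧ p j ∧ p l := by
    simpa [← univ_fin_three_eq hij hil hjl] using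
      Finset.forall_mem_insert (s := {j, l}) (a := i) (p := p)
  have h_coord (m : Fin 3) : b.coord m (AffineMap.lineMap (b i) (b j) t - d) =
      AffineMap.lineMap (b.coord m (b i)) (b.coord m (b j)) t - (b.coord m).linear d := by
    rw [← AffineMap.apply_lineMap, sub_eq_neg_add, ← vadd_eq_add, AffineMap.map_vadd, map_neg,
      vadd_eq_add, sub_eq_neg_add]
  simp only [b.convexHull_eq_nonneg_coord, mem_ofPred_eq, h_univ, h_coord, b.coord_apply_eq,
    b.coord_apply_ne hij, b.coord_apply_ne hij.symm, b.coord_apply_ne hil.symm,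
    b.coord_apply_ne hjl.symm, AffineMap.lineMap_apply_ring', mem_Icc]
  grind

theorem volume_real_lineMap_sub_mem_convexHull (hij : i ≠ j) (hil : i ≠ l) (hjl : j ≠ l) (d : E) :
    (volume.restrict (Icc (0 : ℝ) 1)).real
        {t | AffineMap.lineMap (b i) (b j) t - d ∈ convexHull ℝ (range b)} =
      {d | (b.coord l).linear d ≤ 0}.indicator (overlapRatio b) d := by
  simp only [lineMap_sub_mem_convexHull_iff b hij hil hjl, indicator_apply, mem_ofPred_eq]
  by_cases hl : (b.coord l).linear d ≤ 0
  · have h_excess : ∑ m, ((b.coord m).linear d)⁺ =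
        ((b.coord i).linear d)⁺ + ((b.coord j).linear d)⁺ := by
      rw [univ_fin_three_eq hij hil hjl, Finset.sum_insert (by simp [hij, hil]),
        Finset.sum_pair hjl, posPart_eq_zero.mpr hl, add_zero]
    simp only [hl, and_true, if_true, ofPred_mem_eq, overlapRatio, h_excess]
    rw [measureReal_restrict_apply measurableSet_Icc, Icc_inter_Icc, Real.volume_real_Icc]
    simp only [posPart_def]
    grind
  · simp only [hl, and_false, if_false]
    exact measureReal_empty

variable {F : Type*} [NormedAddCommGroup F] [NormedSpace ℝ F] [CompleteSpace F]
  [FiniteDimensional ℝ E] [MeasurableSpace E] [BorelSpace E] {μ : Measure E} [μ.IsAddHaarMeasure]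
  {k : E → F}

theorem two_smul_integral_lineMap_eq_integral_overlapRatio_smul (hk : LocallyIntegrable k μ)
    (hk_even : k.Even) (hij : i ≠ j) :
    (2 : ℝ) • ∫ t in (0 : ℝ)..1,
        ∫ y in convexHull ℝ (range b), k (AffineMap.lineMap (b i) (b j) t - y) ∂μ =
      ∫ d, overlapRatio b d • k d ∂μ := by
  obtain ⟨l, hil, hjl⟩ : ∃ l, i ≠ l ∧ j ≠ l := by
    revert i j
    decide
  have h_compact : IsCompact (convexHull ℝ (range b)) := (finite_range b).isCompact_convexHull ℝ
  have h_side : ∀ᵐ t ∂volume.restrict (Icc (0 : ℝ) 1),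
      AffineMap.lineMap (b i) (b j) t ∈ convexHull ℝ (range b) := by
    filter_upwards [ae_restrict_mem measurableSet_Icc] with t ht
    exact (convex_convexHull ℝ _).lineMap_mem (subset_convexHull ℝ _ (mem_range_self i))
      (subset_convexHull ℝ _ (mem_range_self j)) ht
  have h_even : (fun d ↦ overlapRatio b d • k d).Even := fun d ↦ by
    simp only [even_overlapRatio b d, hk_even d]
  rw [intervalIntegral.integral_of_le zero_le_one, ← integral_Icc_eq_integral_Ioc,
    integral_setIntegral_sub_eq_integral_measureReal_smul hk
      AffineMap.lineMap_continuous.measurable h_compact h_side h_compact]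
  simp only [volume_real_lineMap_sub_mem_convexHull b hij hil hjl]
  rw [← two_smul_setIntegral_halfSpace_of_even h_even (coord_linear_ne_zero b hil),
    ← integral_indicator (measurableSet_setOf_linearMap_nonpos _)]
  simp only [indicator_smul_left]

end Triangle

theorem one_div_dist_mul_sideIntegral (V : E2 → ℝ) {P Q : E2} (hPQ : P ≠ Q) :
    1 / dist P Q * sideIntegral V P Q = ∫ t in (0 : ℝ)..1, V (AffineMap.lineMap P Q t) := by
  simp only [sideIntegral, AffineMap.lineMap_apply_module]
  rw [one_div, inv_mul_cancel_left₀ (dist_ne_zero.mpr hPQ)]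

theorem stmt_2_general {E F : Type*} [NormedAddCommGroup E] [NormedSpace ℝ E] [MeasurableSpace E]
    [BorelSpace E] [NormedAddCommGroup F] [NormedSpace ℝ F] [CompleteSpace F]
    (hE : Module.finrank ℝ E = 2) {μ : Measure E} [μ.IsAddHaarMeasure]
    {k : E → F} (hk : LocallyIntegrable k μ) (hk_even : k.Even)
    {A B C : E} (hABC : AffineIndependent ℝ ![A, B, C])
    {V : E → F} (hV : ∀ x, V x = ∫ y in convexHull ℝ {A, B, C}, k (x - y) ∂μ) :
    ∫ t in (0 : ℝ)..1, V (AffineMap.lineMap A B t) =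
        ∫ t in (0 : ℝ)..1, V (AffineMap.lineMap B C t) ∧
      ∫ t in (0 : ℝ)..1, V (AffineMap.lineMap B C t) =
        ∫ t in (0 : ℝ)..1, V (AffineMap.lineMap A C t) := by
  have : FiniteDimensional ℝ E := .of_finrank_pos (hE ▸ two_pos)
  have h_span : affineSpan ℝ (range ![A, B, C]) = ⊤ := by
    rw [hABC.affineSpan_eq_top_iff_card_eq_finrank_add_one, hE, Fintype.card_fin]
  let b : AffineBasis (Fin 3) ℝ E := ⟨![A, B, C], hABC, h_span⟩
  have h_range : {A, B, C} = range b := by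
    change _ = range ![A, B, C]
    rw [Matrix.range_cons, Matrix.range_cons_cons_empty, singleton_union]
  have h_side (i j : Fin 3) (hij : i ≠ j) :
      (2 : ℝ) • ∫ t in (0 : ℝ)..1, V (AffineMap.lineMap (b i) (b j) t) =
        ∫ d, overlapRatio b d • k d ∂μ := by
    simpa only [hV, h_range] using
      two_smul_integral_lineMap_eq_integral_overlapRatio_smul b hk hk_even hij
  have h_inj := smul_right_injective F (two_ne_zero (α := ℝ))
  exact ⟨h_inj ((h_side 0 1 (by decide)).trans (h_side 1 2 (by decide)).symm),
    h_inj ((h_side 1 2 (by decide)).trans (h_side 0 2 (by decide)).symm)⟩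

/-- the averaged boundary value of `V_Ω` is the same on the three
sides of a triangle. -/
theorem stmt_2
    (K : ℝ → ℝ) (hK1 : ContDiff ℝ 1 K) (hKanti : StrictAntiOn K (Set.Ioi 0))
    (hKint : IntegrableOn (fun r => K r * r) (Set.Ioc (0:ℝ) 1))
    (A B C : E2) (hABC : AffineIndependent ℝ ![A, B, C])
    (V : E2 → ℝ) (hV : ∀ x, V x = ∫ y in convexHull ℝ {A, B, C}, K (dist x y)) :
    (1 / dist A B) * sideIntegral V A B = (1 / dist B C) * sideIntegral V B C ∧
      (1 / dist B C) * sideIntegral V B C = (1 / dist A C) * sideIntegral V A C := by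
  have hAB : A ≠ B := hABC.injective.ne (by decide : (0 : Fin 3) ≠ 1)
  have hBC : B ≠ C := hABC.injective.ne (by decide : (1 : Fin 3) ≠ 2)
  have hAC : A ≠ C := hABC.injective.ne (by decide : (0 : Fin 3) ≠ 2)
  rw [one_div_dist_mul_sideIntegral V hAB, one_div_dist_mul_sideIntegral V hBC,
    one_div_dist_mul_sideIntegral V hAC]
  exact stmt_2_general finrank_euclideanSpace_fin
    (hK1.continuous.comp continuous_norm).locallyIntegrable (fun x ↦ congrArg K (norm_neg x))
    hABC (by simpa only [dist_eq_norm, Function.comp_apply] using hV)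
end
end
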